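/- arXiv:1011.3643 — 2 statements merged into one kernel-verified Lean document; each statement's English description precedes it below -/
import Mathlib

section
/- Let y : ℝ → ℝ be the solution of y'' = −2y³ with y(0) = 0, y'(0) = 1, and let K := ∫₀¹ ds/√(1 − s⁴). Then y is odd, y(−t) = −y(t) for all t, and y is antiperiodic with antiperiod 2K: y(t + 2K) = −y(t) for all t ∈ ℝ. -/
/-!
The energy `(y')² + y⁴` is constantly `1`, so `|y| ≤ 1` and the vector field
`(p, q) ↦ (q, -2p³)` is Lipschitz on the region containing the trajectory. Hence solutions are
determined by their value and derivative at one point (`quartic_unique`), and oddness follows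
because `t ↦ -y(-t)` solves the same initial value problem.

Let `T` be the first positive zero of `y'` (`exists_first_zero`): it exists since otherwise `y`
would be increasing and `y''` eventually below a negative constant, forcing `y'` to become negative.
On `(0, T)` the energy identity gives `y' = √(1 - y⁴)`, and `y` maps `(0, T)` bijectively onto
`(0, 1)`, so the substitution `s = y t` in the integral defining `K` yields `K = T`
(`Kell_eq_first_zero`). Since `y'(K) = 0`, uniqueness at `K` gives the reflection symmetry
`y(2K - t) = y(t)`; together with oddness this is `y(t + 2K) = y(-t) = -y(t)`.
-/

open Real

/-- The complete elliptic integral `K(i) = ∫₀¹ ds/√(1 − s⁴)`. -/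
noncomputable def Kell : ℝ := ∫ s in (0:ℝ)..1, 1 / Real.sqrt (1 - s ^ 4)

open Set MeasureTheory

/-- Two solutions of the system `y' = z`, `z' = -2y³` that stay in the strip `|y| ≤ 1` and agree
at one time agree at all times. -/
lemma quartic_unique {y z u w : ℝ → ℝ} (t₀ : ℝ)
    (hy : ∀ t, HasDerivAt y (z t) t) (hz : ∀ t, HasDerivAt z (-2 * y t ^ 3) t)
    (hu : ∀ t, HasDerivAt u (w t) t) (hw : ∀ t, HasDerivAt w (-2 * u t ^ 3) t)
    (by1 : ∀ t, |y t| ≤ 1) (bu1 : ∀ t, |u t| ≤ 1)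
    (h0 : y t₀ = u t₀) (h1 : z t₀ = w t₀) (t : ℝ) : y t = u t := by
  have hlip : LipschitzOnWith 6 (fun p : ℝ × ℝ => (p.2, -2 * p.1 ^ 3)) {p | |p.1| ≤ 1} := by
    refine LipschitzOnWith.of_dist_le_mul fun p hp q hq => ?_
    simp only [mem_ofPred_eq] at hp hq
    have e1 : |p.1 - q.1| ≤ dist p q := le_max_left (dist p.1 q.1) (dist p.2 q.2)
    have e2 : |p.2 - q.2| ≤ dist p q := le_max_right (dist p.1 q.1) (dist p.2 q.2)
    have hd : 0 ≤ dist p q := dist_nonneg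
    rw [Prod.dist_eq]
    refine max_le ?_ ?_
    · change |p.2 - q.2| ≤ 6 * dist p q
      linarith
    · change |-2 * p.1 ^ 3 - -2 * q.1 ^ 3| ≤ 6 * dist p q
      have hfac : -2 * p.1 ^ 3 - -2 * q.1 ^ 3
          = (-2 * (p.1 ^ 2 + p.1 * q.1 + q.1 ^ 2)) * (p.1 - q.1) := by ring
      have hb : |-2 * (p.1 ^ 2 + p.1 * q.1 + q.1 ^ 2)| ≤ 6 := by
        rw [abs_le] at hp hq ⊢
        constructor <;> nlinarith [sq_nonneg (p.1 - q.1), sq_nonneg (p.1 + q.1)]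
      rw [hfac, abs_mul]
      exact mul_le_mul hb e1 (abs_nonneg _) (by norm_num)
  have key := ODE_solution_unique_univ (K := 6)
    (v := fun _ => fun p : ℝ × ℝ => (p.2, -2 * p.1 ^ 3)) (s := fun _ => {p | |p.1| ≤ 1})
    (f := fun t => (y t, z t)) (g := fun t => (u t, w t)) (t₀ := t₀) (fun _ => hlip)
    (fun t => ⟨(hy t).prodMk (hz t), by1 t⟩)
    (fun t => ⟨(hu t).prodMk (hw t), bu1 t⟩) (by simp [h0, h1])
  exact congrArg Prod.fst (congrFun key t)

/-- Conservation of energy. -/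
lemma quartic_energy {y z : ℝ → ℝ}
    (hy : ∀ t, HasDerivAt y (z t) t) (hz : ∀ t, HasDerivAt z (-2 * y t ^ 3) t)
    (h0 : y 0 = 0) (h1 : z 0 = 1) (t : ℝ) : z t ^ 2 + y t ^ 4 = 1 := by
  have hE : ∀ t, HasDerivAt (fun t => z t ^ 2 + y t ^ 4) 0 t := fun t => by
    refine (((hz t).pow 2).add ((hy t).pow 4)).congr_deriv ?_
    norm_num
    ring
  have := is_const_of_deriv_eq_zero (fun t => (hE t).differentiableAt) (fun t => (hE t).deriv) t 0
  simpa [h0, h1] using this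

lemma exists_first_zero {y z : ℝ → ℝ}
    (hy : ∀ t, HasDerivAt y (z t) t) (hz : ∀ t, HasDerivAt z (-2 * y t ^ 3) t)
    (h0 : y 0 = 0) (h1 : z 0 = 1) :
    ∃ T, 0 < T ∧ z T = 0 ∧ ∀ t ∈ Ico 0 T, 0 < z t := by
  have hzc : Continuous z := continuous_iff_continuousAt.2 fun t => (hz t).continuousAt
  have hyc : Continuous y := continuous_iff_continuousAt.2 fun t => (hy t).continuousAt
  -- Without zeros of `z`, the intermediate value theorem propagates positivity from `z 0 = 1`.
  have hpos : ∀ b, 0 ≤ b → (∀ t ∈ Icc 0 b, z t ≠ 0) → 0 < z b := by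
    intro b hb hne
    by_contra! hle
    obtain ⟨t, ht, ht0⟩ := intermediate_value_Icc' hb hzc.continuousOn
      (show (0 : ℝ) ∈ Icc (z b) (z 0) from ⟨hle, by rw [h1]; norm_num⟩)
    exact hne t ht ht0
  have hex : ∃ t, 0 ≤ t ∧ z t = 0 := by
    by_contra! hne
    have hp : ∀ t, 0 ≤ t → 0 < z t := fun t ht => hpos t ht fun s hs => hne s hs.1
    have hm : StrictMonoOn y (Ici 0) := strictMonoOn_of_deriv_pos (convex_Ici 0)
      hyc.continuousOn fun t ht => by
        rw [interior_Ici] at ht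
        rw [(hy t).deriv]
        exact hp t (le_of_lt ht)
    have hc : 0 < y 1 := by
      rw [← h0]
      exact hm (by simp) (by simp) one_pos
    have hc3 : 0 < 2 * y 1 ^ 3 := by positivity
    have hz1 := hp 1 zero_le_one
    -- At time `b` the upper bound `z 1 - 2 (y 1)³ (b - 1)` for `z b` vanishes.
    set b := 1 + z 1 / (2 * y 1 ^ 3) with hbdef
    have hb : 1 < b := by
      have : 0 < z 1 / (2 * y 1 ^ 3) := by positivity
      linarith
    obtain ⟨c, hc', hceq⟩ := exists_hasDerivAt_eq_slope z (fun t => -2 * y t ^ 3) hb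
      hzc.continuousOn (fun t _ => hz t)
    have hyc1 : y 1 ^ 3 ≤ y c ^ 3 := by
      have := hm (by simp) (show c ∈ Ici (0:ℝ) from by have := hc'.1; simp; linarith) hc'.1
      gcongr
    have hzb := hp b (by linarith)
    rw [eq_div_iff (by linarith)] at hceq
    have e : 2 * y 1 ^ 3 * (b - 1) = z 1 := by
      rw [hbdef]; field_simp; ring
    nlinarith
  have hcl : IsClosed {t | 0 ≤ t ∧ z t = 0} :=
    (isClosed_le continuous_const continuous_id).inter (isClosed_eq hzc continuous_const)
  have hbdd : BddBelow {t | 0 ≤ t ∧ z t = 0} := ⟨0, fun t ht => ht.1⟩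
  have hmem := hcl.csInf_mem hex hbdd
  set T := sInf {t | 0 ≤ t ∧ z t = 0}
  refine ⟨T, lt_of_le_of_ne hmem.1 fun h => ?_, hmem.2, fun t ht => hpos t ht.1 fun s hs hs0 => ?_⟩
  · have := hmem.2
    rw [← h, h1] at this
    exact one_ne_zero this
  · exact absurd (csInf_le hbdd ⟨hs.1, hs0⟩) (not_le.2 (lt_of_le_of_lt hs.2 ht.2))

/-- The substitution `s = y t` turns the integral defining `K` into `∫₀ᵀ 1 dt`. -/
lemma Kell_eq_first_zero {y z : ℝ → ℝ} {T : ℝ}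
    (hy : ∀ t, HasDerivAt y (z t) t) (hE : ∀ t, z t ^ 2 + y t ^ 4 = 1) (h0 : y 0 = 0)
    (hT : 0 < T) (hzT : z T = 0) (hpos : ∀ t ∈ Ico 0 T, 0 < z t) : Kell = T := by
  have hyc : Continuous y := continuous_iff_continuousAt.2 fun t => (hy t).continuousAt
  have hm : StrictMonoOn y (Icc 0 T) := strictMonoOn_of_deriv_pos (convex_Icc 0 T)
    hyc.continuousOn fun t ht => by
      rw [interior_Icc] at ht
      rw [(hy t).deriv]
      exact hpos t ⟨ht.1.le, ht.2⟩
  have hyT : y T = 1 := by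
    have hp : 0 < y T := by
      rw [← h0]
      exact hm (left_mem_Icc.2 hT.le) (right_mem_Icc.2 hT.le) hT
    have h4 : y T ^ 4 = 1 := by simpa [hzT] using hE T
    exact (pow_eq_one_iff_of_nonneg hp.le (by norm_num)).1 h4
  have him : y '' Ioo 0 T = Ioo 0 1 := by
    apply Subset.antisymm
    · rintro _ ⟨t, ht, rfl⟩
      have ht' := Ioo_subset_Icc_self ht
      rw [← hyT, ← h0]
      exact ⟨hm (left_mem_Icc.2 hT.le) ht' ht.1, hm ht' (right_mem_Icc.2 hT.le) ht.2⟩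
    · have := intermediate_value_Ioo hT.le hyc.continuousOn (f := y)
      rwa [h0, hyT] at this
  rw [Kell, intervalIntegral.integral_of_le zero_le_one, integral_Ioc_eq_integral_Ioo, ← him,
    integral_image_eq_integral_abs_deriv_smul measurableSet_Ioo
      (fun t _ => (hy t).hasDerivWithinAt) (hm.injOn.mono Ioo_subset_Icc_self)]
  have hone : ∀ t ∈ Ioo 0 T, |z t| • (1 / √(1 - y t ^ 4)) = (1 : ℝ) := fun t ht => by
    have hzt := hpos t ⟨ht.1.le, ht.2⟩
    have : 1 - y t ^ 4 = z t ^ 2 := by linarith [hE t]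
    rw [this, Real.sqrt_sq hzt.le, abs_of_pos hzt, smul_eq_mul]
    field_simp
  rw [setIntegral_congr_fun measurableSet_Ioo hone]
  simp [hT.le]

/-- The solution of `y'' = -2y³`, `y 0 = 0`, `y' 0 = 1` (the Jacobi elliptic function
`sn(·, i)`) is odd, `y(−t) = −y(t)`, and antiperiodic with antiperiod `2K`:
`y(t + 2K) = −y(t)`, where `K = ∫₀¹ ds/√(1 − s⁴)`. -/
theorem stmt_4 (y : ℝ → ℝ)
    (hy1 : Differentiable ℝ y) (hy2 : Differentiable ℝ (deriv y))
    (hode : ∀ u : ℝ, deriv (deriv y) u = -2 * (y u) ^ 3)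
    (h0 : y 0 = 0) (h1 : deriv y 0 = 1) :
    (∀ t : ℝ, y (-t) = -y t) ∧ (∀ t : ℝ, y (t + 2 * Kell) = -y t) := by
  have hy : ∀ t, HasDerivAt y (deriv y t) t := fun t => (hy1 t).hasDerivAt
  have hz : ∀ t, HasDerivAt (deriv y) (-2 * y t ^ 3) t := fun t => hode t ▸ (hy2 t).hasDerivAt
  have hE := quartic_energy hy hz h0 h1
  have hb : ∀ t, |y t| ≤ 1 := fun t => by
    have h4 : |y t| ^ 4 ≤ 1 := by
      rw [pow_abs, abs_of_nonneg (by positivity)]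
      nlinarith [hE t, sq_nonneg (deriv y t)]
    exact (pow_le_one_iff_of_nonneg (abs_nonneg _) (by norm_num)).1 h4
  have hodd : ∀ t, y (-t) = -y t := fun t => by
    have := quartic_unique (u := fun t => -y (-t)) (w := fun t => deriv y (-t)) 0 hy hz
      (fun t => ((hy (-t)).comp t (hasDerivAt_neg t)).neg.congr_deriv (by ring))
      (fun t => ((hz (-t)).comp t (hasDerivAt_neg t)).congr_deriv (by ring))
      hb (fun t => by simpa using hb (-t)) (by simp [h0]) (by simp) t
    linarith
  obtain ⟨T, hT, hzT, hpos⟩ := exists_first_zero hy hz h0 h1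
  have hK := Kell_eq_first_zero hy hE h0 hT hzT hpos
  refine ⟨hodd, fun t => ?_⟩
  have hrefl := quartic_unique (u := fun t => y (2 * T - t)) (w := fun t => -deriv y (2 * T - t)) T
    hy hz
    (fun t => ((hy (2 * T - t)).comp t ((hasDerivAt_id t).const_sub (2 * T))).congr_deriv (by ring))
    (fun t => ((hz (2 * T - t)).comp t
      ((hasDerivAt_id t).const_sub (2 * T))).neg.congr_deriv (by ring))
    hb (fun t => hb _) (by simp [two_mul]) (by simp [two_mul, hzT]) (-t)
  rw [hK, ← hodd t, hrefl]
  congr 1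
  ring
end

section
/- Let K := ∫₀¹ ds/√(1 − s⁴), B_n := (2n+1)(π²/K²)·(−1)^{n+1} e^{−(n+1/2)π}/(1 + e^{−(2n+1)π}), m_n := (2n+1)M with M > 0, and define the gluon dressing function D(s) := s · Σ_{n≥0} B_n/(s − m_n²) for real s with 0 ≤ s < m₀². Then lim_{s→0⁺} D(s) = 0 and lim_{s→0⁺} D(s)/s = −Σ_{n≥0} B_n/m_n² ≠ 0. Consequently the infrared running coupling α_s(p) := (g²/4π) D(p²) [Z(p)]² with ghost dressing Z(p) = 1 vanishes as p² at lower momenta: α_s(p) = (g²/4π) p² f(p²) with f(0) ≠ 0, so the theory reaches a trivial infrared fixed point. -/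
/-!
Write `q = e^{-π}`, so that `|B_n| ≤ C (2n+1) q^n` with `C = (π²/K²) e^{-π/2}`. Hence the residues are
absolutely summable, and for `s ≤ M²/2` every denominator satisfies `|s - m_n²| ≥ M²/2`; the
Weierstrass test makes the propagator `F(s) = Σ B_n/(s - m_n²)` continuous at `0`
(`continuousAt_propagator`). As `D(s) = s F(s)`, both limits follow, and `f = F` is the required
factor.

The value `F(0) = -Σ B_n/m_n²` is nonzero because the `n = 0` term dominates: it has absolute value
`A/(1+q)` with `A = C/M²`, while the `n`-th one is at most `A q^n`, so the tail is at most
`A q/(1-q)`; since `q < 1/4`, this is smaller. Here `A > 0` requires `K > 0` (rather than merely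
`K ≥ 0`), i.e. the convergence of the elliptic integral at its endpoint singularity (`Kell_pos`).
-/

open Real Filter

/-- The residues `B_n = (2n+1)(π²/K²)(−1)^{n+1} e^{−(n+1/2)π}/(1 + e^{−(2n+1)π})`
of the infrared gluon propagator. -/
noncomputable def Bcoef (n : ℕ) : ℝ :=
  (2 * (n : ℝ) + 1) * (π ^ 2 / Kell ^ 2) *
    ((-1) ^ (n + 1) * Real.exp (-(((n : ℝ) + 1 / 2)) * π)) / (1 + Real.exp (-(2 * (n : ℝ) + 1) * π))

/-- The gluon dressing function `D(s) = s · Σ_n B_n/(s − m_n²)` with `m_n = (2n+1)M`. -/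
noncomputable def Dress (M s : ℝ) : ℝ :=
  s * ∑' n : ℕ, Bcoef n / (s - ((2 * (n : ℝ) + 1) * M) ^ 2)

/-- The integrand is dominated by `(1 - s)^{-1/2}`, so the improper integral converges. -/
lemma intervalIntegrable_Kell :
    IntervalIntegrable (fun s : ℝ => 1 / Real.sqrt (1 - s ^ 4)) MeasureTheory.volume 0 1 := by
  have h0 : IntervalIntegrable (fun x : ℝ => x ^ (-(1 / 2) : ℝ)) MeasureTheory.volume 0 1 :=
    intervalIntegral.intervalIntegrable_rpow' (by norm_num)
  have h1 : IntervalIntegrable (fun x : ℝ => (1 - x) ^ (-(1 / 2) : ℝ))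
      MeasureTheory.volume 0 1 := by
    have := (h0.comp_sub_left 1).symm
    simpa using this
  refine h1.mono_fun' ?_ ?_
  · exact (by fun_prop : Measurable fun s : ℝ => 1 / Real.sqrt (1 - s ^ 4)).aestronglyMeasurable
  · refine MeasureTheory.ae_restrict_of_forall_mem measurableSet_uIoc ?_
    intro s hs
    rw [Set.uIoc_of_le zero_le_one] at hs
    obtain ⟨hs0, hs1⟩ := hs
    beta_reduce
    rw [Real.norm_of_nonneg (by positivity), Real.rpow_neg (by linarith), ← Real.sqrt_eq_rpow,
      one_div]
    rcases hs1.eq_or_lt with rfl | hlt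
    · simp
    · have : s ^ 4 ≤ s := pow_le_of_le_one hs0.le hs1 (by norm_num)
      have : 0 < Real.sqrt (1 - s) := Real.sqrt_pos.2 (by linarith)
      gcongr

lemma Kell_pos : 0 < Kell := by
  refine intervalIntegral.intervalIntegral_pos_of_pos_on intervalIntegrable_Kell ?_ one_pos
  intro s hs
  have : s ^ 4 < 1 := pow_lt_one₀ hs.1.le hs.2 (by norm_num)
  have : 0 < Real.sqrt (1 - s ^ 4) := Real.sqrt_pos.2 (by linarith)
  positivity

lemma exp_neg_pi_lt : Real.exp (-π) < 1 / 4 := by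
  rw [Real.exp_neg, inv_eq_one_div]
  apply one_div_lt_one_div_of_lt (by norm_num)
  linarith [Real.add_one_le_exp π, Real.pi_gt_three]

lemma exp_half_shift (n : ℕ) :
    Real.exp (-((n : ℝ) + 1 / 2) * π) = Real.exp (-π / 2) * Real.exp (-π) ^ n := by
  rw [← Real.exp_nat_mul, ← Real.exp_add]
  congr 1
  ring

lemma abs_Bcoef_le (n : ℕ) :
    |Bcoef n| ≤ (2 * (n : ℝ) + 1) * (π ^ 2 / Kell ^ 2 * Real.exp (-π / 2)) * Real.exp (-π) ^ n := by
  have h : |Bcoef n| = (2 * (n : ℝ) + 1) * (π ^ 2 / Kell ^ 2) *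
      Real.exp (-((n : ℝ) + 1 / 2) * π) / (1 + Real.exp (-(2 * (n : ℝ) + 1) * π)) := by
    unfold Bcoef
    rw [abs_div, abs_mul, abs_mul ((-1) ^ (n + 1)), abs_pow, abs_neg, abs_one, one_pow, one_mul,
      abs_of_nonneg (by positivity : 0 ≤ (2 * (n : ℝ) + 1) * (π ^ 2 / Kell ^ 2)),
      abs_of_pos (Real.exp_pos _), abs_of_pos (by positivity)]
  rw [h, exp_half_shift]
  refine (div_le_self (by positivity) ?_).trans (le_of_eq (by ring))
  linarith [Real.exp_pos (-(2 * (n : ℝ) + 1) * π)]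

lemma summable_abs_Bcoef : Summable fun n => |Bcoef n| := by
  have hq : ‖Real.exp (-π)‖ < 1 := by
    rw [Real.norm_of_nonneg (Real.exp_pos _).le]
    linarith [exp_neg_pi_lt]
  have h0 := summable_pow_mul_geometric_of_norm_lt_one 0 hq
  have h1 := summable_pow_mul_geometric_of_norm_lt_one 1 hq
  refine Summable.of_nonneg_of_le (fun _ => abs_nonneg _) abs_Bcoef_le ?_
  refine (((h1.mul_left 2).add h0).mul_left (π ^ 2 / Kell ^ 2 * Real.exp (-π / 2))).congr ?_
  intro n
  ring

/-- The mass gap: all squared masses are at least `M²`. -/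
lemma sq_le_sq_mass {M : ℝ} (hM : 0 < M) (n : ℕ) : M ^ 2 ≤ ((2 * (n : ℝ) + 1) * M) ^ 2 := by
  have : M ≤ (2 * (n : ℝ) + 1) * M :=
    le_mul_of_one_le_left hM.le (by linarith [n.cast_nonneg (α := ℝ)])
  gcongr

lemma continuousAt_propagator {M : ℝ} (hM : 0 < M) :
    ContinuousAt (fun s : ℝ => ∑' n : ℕ, Bcoef n / (s - ((2 * (n : ℝ) + 1) * M) ^ 2)) 0 := by
  have hM2 : 0 < M ^ 2 := by positivity
  have key : ContinuousOn (fun s : ℝ => ∑' n : ℕ, Bcoef n / (s - ((2 * (n : ℝ) + 1) * M) ^ 2))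
      (Set.Iic (M ^ 2 / 2)) := by
    refine continuousOn_tsum (u := fun n => |Bcoef n| / (M ^ 2 / 2)) ?_
      (summable_abs_Bcoef.div_const _) ?_
    · intro n
      refine continuousOn_const.div (by fun_prop) ?_
      intro s hs
      have := sq_le_sq_mass hM n
      have : s ≤ M ^ 2 / 2 := hs
      apply ne_of_lt
      linarith
    · intro n s hs
      have := sq_le_sq_mass hM n
      have : s ≤ M ^ 2 / 2 := hs
      rw [norm_div, Real.norm_eq_abs, Real.norm_eq_abs, abs_sub_comm]
      have : M ^ 2 / 2 ≤ |((2 * (n : ℝ) + 1) * M) ^ 2 - s| := le_trans (by linarith) (le_abs_self _)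
      gcongr
  exact key.continuousAt (Iic_mem_nhds (by positivity))

lemma tsum_Bcoef_div_mass_ne_zero {M : ℝ} (hM : 0 < M) :
    (∑' n : ℕ, Bcoef n / ((2 * (n : ℝ) + 1) * M) ^ 2) ≠ 0 := by
  have hK := Kell_pos
  set q := Real.exp (-π) with hq
  have hq0 : 0 < q := Real.exp_pos _
  have hq4 : q < 1 / 4 := exp_neg_pi_lt
  set A := π ^ 2 / Kell ^ 2 * Real.exp (-π / 2) / M ^ 2 with hA
  have hA0 : 0 < A := by positivity
  set t : ℕ → ℝ := fun n => Bcoef n / ((2 * (n : ℝ) + 1) * M) ^ 2 with ht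
  have hbound : ∀ n, ‖t n‖ ≤ A * q ^ n := by
    intro n
    have hn : (0 : ℝ) ≤ n := n.cast_nonneg
    rw [ht, Real.norm_eq_abs, abs_div, abs_of_nonneg (sq_nonneg ((2 * (n : ℝ) + 1) * M)),
      div_le_iff₀ (by positivity)]
    refine (abs_Bcoef_le n).trans ?_
    have e : A * q ^ n * ((2 * (n : ℝ) + 1) * M) ^ 2 =
        (2 * (n : ℝ) + 1) ^ 2 * (π ^ 2 / Kell ^ 2 * Real.exp (-π / 2)) * q ^ n := by
      rw [hA]
      field_simp
    rw [e]
    gcongr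
    nlinarith
  have hgeo : HasSum (fun n => A * q * q ^ n) (A * q * (1 - q)⁻¹) :=
    (hasSum_geometric_of_lt_one hq0.le (by linarith)).mul_left _
  have hsum : Summable t := Summable.of_norm_bounded
    ((summable_geometric_of_lt_one hq0.le (by linarith)).mul_left A) hbound
  have htail : ‖∑' n, t (n + 1)‖ ≤ A * q * (1 - q)⁻¹ :=
    tsum_of_norm_bounded hgeo fun n => (hbound (n + 1)).trans (le_of_eq (by ring))
  have ht0 : t 0 = -(A / (1 + q)) := by
    have h1 : Real.exp (-(1 / 2) * π) = Real.exp (-π / 2) := by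
      congr 1
      ring
    simp only [ht, Bcoef, hA, hq]
    norm_num [h1]
    field_simp
  have hsmall : A * q * (1 - q)⁻¹ < A / (1 + q) := by
    rw [← div_eq_mul_inv, div_lt_div_iff₀ (by linarith) (by linarith), mul_assoc]
    apply mul_lt_mul_of_pos_left _ hA0
    nlinarith
  rw [hsum.tsum_eq_zero_add, ht0]
  have := (Real.le_norm_self _).trans htail
  apply ne_of_lt
  linarith

/-- `lim_{s→0⁺} D(s) = 0` and `lim_{s→0⁺} D(s)/s = −Σ_n B_n/m_n² ≠ 0`; consequently the
infrared running coupling `α_s(p) = (g²/4π) D(p²) Z(p)²` with ghost dressing `Z = 1`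
vanishes as `p²` at lower momenta: `α_s = (g²/4π) p² f(p²)` with `f(0) ≠ 0`,
so the theory reaches a trivial infrared fixed point. -/
theorem stmt_10 (M : ℝ) (hM : 0 < M) :
    Tendsto (fun s => Dress M s) (nhdsWithin 0 (Set.Ioi 0)) (nhds 0) ∧
    Tendsto (fun s => Dress M s / s) (nhdsWithin 0 (Set.Ioi 0))
      (nhds (-(∑' n : ℕ, Bcoef n / ((2 * (n : ℝ) + 1) * M) ^ 2))) ∧
    -(∑' n : ℕ, Bcoef n / ((2 * (n : ℝ) + 1) * M) ^ 2) ≠ 0 ∧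
    ∃ f : ℝ → ℝ, f 0 ≠ 0 ∧ ContinuousWithinAt f (Set.Ici 0) 0 ∧
      ∀ g s : ℝ, 0 < s → s < ((2 * (0 : ℝ) + 1) * M) ^ 2 →
        g ^ 2 / (4 * π) * Dress M s * (1 : ℝ) ^ 2 = g ^ 2 / (4 * π) * s * f s := by
  have hc := continuousAt_propagator hM
  have hF0 : (∑' n : ℕ, Bcoef n / ((0 : ℝ) - ((2 * (n : ℝ) + 1) * M) ^ 2)) =
      -(∑' n : ℕ, Bcoef n / ((2 * (n : ℝ) + 1) * M) ^ 2) := by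
    rw [← tsum_neg]
    simp only [zero_sub, div_neg]
  have hne := neg_ne_zero.2 (tsum_Bcoef_div_mass_ne_zero hM)
  refine ⟨?_, ?_, hne, _, ?_, hc.continuousWithinAt, ?_⟩
  · have := (tendsto_id.mul hc.tendsto).mono_left (nhdsWithin_le_nhds (s := Set.Ioi 0))
    simpa [Dress] using this
  · have := hc.tendsto.mono_left (nhdsWithin_le_nhds (s := Set.Ioi 0))
    rw [hF0] at this
    refine this.congr' ?_
    filter_upwards [self_mem_nhdsWithin] with s hs
    rw [Dress, mul_div_cancel_left₀ _ (ne_of_gt hs)]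
  · rwa [hF0]
  · intro g s _ _
    rw [Dress]
    ring
end
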